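/- arXiv:1604.06997 — 2 statements merged into one kernel-verified Lean document; each statement's English description precedes it below -/
import Mathlib

section
/- For every p ∈ G, either CP(p) ∈ MMC or CP(p) ∈ MFC. -/
open Finset

attribute [local instance] Classical.propDecidable

/-- A point in the plane: first coordinate is the key, second is the time. -/
abbrev Pt : Type := ℤ × ℤ

/-- `r` lies in the closed axis-parallel rectangle with opposite corners `p` and `q`. -/
def inRect (p q r : Pt) : Prop :=
  min p.1 q.1 ≤ r.1 ∧ r.1 ≤ max p.1 q.1 ∧ min p.2 q.2 ≤ r.2 ∧ r.2 ≤ max p.2 q.2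

/-- `r` lies in the open axis-parallel rectangle with opposite corners `p` and `q`. -/
def inOpenRect (p q r : Pt) : Prop :=
  min p.1 q.1 < r.1 ∧ r.1 < max p.1 q.1 ∧ min p.2 q.2 < r.2 ∧ r.2 < max p.2 q.2

/-- `S` is an arborally satisfied set. -/
def ArbSat (S : Finset Pt) : Prop :=
  ∀ p ∈ S, ∀ q ∈ S, p.1 = q.1 ∨ p.2 = q.2 ∨ ∃ r ∈ S, r ≠ p ∧ r ≠ q ∧ inRect p q r

/-- `X` is the permutation point set `{(σ(t), t) : 1 ≤ t ≤ n}` of some permutation `σ` of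
`{1, …, n}`. -/
def IsPermPointSet (n : ℕ) (X : Finset Pt) : Prop :=
  ∃ σ : Equiv.Perm (Fin n),
    X = Finset.univ.image (fun t : Fin n => ((((σ t : ℕ) : ℤ) + 1, ((t : ℕ) : ℤ) + 1) : Pt))

/-- The points added by GREEDY at time `t`, given the point set `X` and the set `G` of points
added before time `t`: for the point `p` of `X` with time `t` and each point `q` of time `< t`
with a different key such that the rectangle spanned by `p` and `q` contains no other point of
time `< t`, the point `(key q, t)` is added. -/
noncomputable def greedyStep (X G : Finset Pt) (t : ℤ) : Finset Pt :=
  (X.filter (fun p => p.2 = t)).biUnion (fun p =>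
    (((X ∪ G).filter (fun s => s.2 < t)).filter (fun q =>
      q.1 ≠ p.1 ∧ ∀ r ∈ (X ∪ G).filter (fun s => s.2 < t), inRect p q r → r = q)).image
      (fun q => ((q.1, t) : Pt)))

/-- All points added by GREEDY while processing times `1, …, t`. -/
noncomputable def greedyUpTo (X : Finset Pt) : ℕ → Finset Pt
  | 0 => ∅
  | t + 1 => greedyUpTo X t ∪ greedyStep X (greedyUpTo X t) ((t : ℤ) + 1)

/-- The set `G` of points added by GREEDY over the whole execution on a permutation point set
`X` of size `n`. -/
noncomputable def greedyG (n : ℕ) (X : Finset Pt) : Finset Pt := greedyUpTo X n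

/-- `OP r` is the point of `X` processed at the time at which `r` was added; for `r ∈ X`,
`OP r = r`. -/
noncomputable def OP (X : Finset Pt) (r : Pt) : Pt :=
  ((X.filter (fun p => p.2 = r.2)).toList).headI

/-- The first point of `S` above `p`: the point of `S` with the same key as `p`, smaller time,
and the largest such time. -/
noncomputable def firstAbove (S : Finset Pt) (p : Pt) : Pt :=
  (p.1, (((S.filter (fun q => q.1 = p.1 ∧ q.2 < p.2)).image Prod.snd).max).unbotD 0)

/-- The pair `CP(p) = (OP(p), OP(q))` where `q` is the first point of `X ∪ G` above `p`. -/
noncomputable def CP (X G : Finset Pt) (p : Pt) : Pt × Pt :=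
  (OP X p, OP X (firstAbove (X ∪ G) p))

/-- `CP(p) ∈ MMC` (*zig*). -/
def inMMC (X G : Finset Pt) (p : Pt) : Prop :=
  ((CP X G p).1.1 < p.1 ∧ (CP X G p).2.1 < (CP X G p).1.1 ∧ (CP X G p).2.2 < (CP X G p).1.2)
  ∨ (p.1 < (CP X G p).1.1 ∧ (CP X G p).1.1 < (CP X G p).2.1 ∧ (CP X G p).2.2 < (CP X G p).1.2)

/-- `CP(p) ∈ MFC` (*zag*). -/
def inMFC (X G : Finset Pt) (p : Pt) : Prop :=
  ((CP X G p).1.1 < p.1 ∧ p.1 ≤ (CP X G p).2.1 ∧ (CP X G p).2.2 < p.2)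
  ∨ (p.1 < (CP X G p).1.1 ∧ (CP X G p).2.1 ≤ p.1 ∧ (CP X G p).2.2 < p.2)

/-- A pair is good if no point of `X` lies in the open rectangle spanned by it. -/
def IsGoodPair (X : Finset Pt) (pr : Pt × Pt) : Prop :=
  ∀ r ∈ X, ¬ inOpenRect pr.1 pr.2 r

/-- `B` is a block of `X`: the set of points of `X` whose times lie in some interval, whose
keys form a set of consecutive integers; blocks are nonempty. -/
def IsBlock (X B : Finset Pt) : Prop :=
  B.Nonempty ∧ (∃ i j : ℤ, B = X.filter (fun p => i ≤ p.2 ∧ p.2 ≤ j)) ∧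
    ∃ c d : ℤ, B.image Prod.fst = Finset.Icc c d

/-- `Top(B)`: the point of `B` with the smallest time. -/
noncomputable def TopPt (B : Finset Pt) : Pt :=
  ((B.filter (fun p => ∀ q ∈ B, p.2 ≤ q.2)).toList).headI

/-- A decomposition tree of `X`: a rooted tree whose nodes are blocks of `X`, whose root is
`X`, whose leaves are exactly the singleton blocks, and in which the children of every
internal node partition it. -/
structure DecompTree (X : Finset Pt) where
  nodes : Finset (Finset Pt)
  parent : Finset Pt → Finset Pt
  isBlock_nodes : ∀ B ∈ nodes, IsBlock X B
  root_mem : X ∈ nodes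
  parent_mem : ∀ B ∈ nodes, B ≠ X → parent B ∈ nodes
  ssubset_parent : ∀ B ∈ nodes, B ≠ X → B ⊂ parent B
  leaf_iff : ∀ B ∈ nodes, (¬ ∃ C ∈ nodes, C ≠ X ∧ parent C = B) ↔ B.card = 1
  children_partition : ∀ B ∈ nodes, B.card ≠ 1 →
    ∀ x ∈ B, ∃! C, C ∈ nodes ∧ C ≠ X ∧ parent C = B ∧ x ∈ C

/-- The children of a node `B` in a decomposition tree. -/
noncomputable def DecompTree.children {X : Finset Pt} (T : DecompTree X) (B : Finset Pt) :
    Finset (Finset Pt) :=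
  T.nodes.filter (fun C => C ≠ X ∧ T.parent C = B)

/-- `X` is `k`-decomposable: it admits a decomposition tree in which every node has at most
`k` children. -/
def kDecomposable (k : ℕ) (X : Finset Pt) : Prop :=
  ∃ T : DecompTree X, ∀ B ∈ T.nodes, (T.children B).card ≤ k

/-- `RT(p)`: the node of the decomposition tree closest to the root (i.e. containing all
others) among the nodes `B` with `Top(B) = p`. -/
noncomputable def RT {X : Finset Pt} (T : DecompTree X) (p : Pt) : Finset Pt :=
  (((T.nodes.filter (fun B => TopPt B = p)).filter
      (fun B => ∀ C ∈ T.nodes, TopPt C = p → C ⊆ B)).toList).headI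

/-- The points added by GREEDY (`G`) while processing `Top(B)` that lie to the left of
`Top(B)`. -/
noncomputable def leftSet (G B : Finset Pt) : Finset Pt :=
  G.filter (fun s => s.2 = (TopPt B).2 ∧ s.1 < (TopPt B).1)

/-- `Left(B)`: among the points added by GREEDY while processing `Top(B)` with key less than
`key (Top B)`, the one with the largest key (junk if none exists). -/
noncomputable def leftPt (G B : Finset Pt) : Pt :=
  (((leftSet G B).filter (fun s => ∀ r ∈ leftSet G B, r.1 ≤ s.1)).toList).headI

/-- The points added by GREEDY (`G`) while processing `Top(B)` that lie to the right of
`Top(B)`. -/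
noncomputable def rightSet (G B : Finset Pt) : Finset Pt :=
  G.filter (fun s => s.2 = (TopPt B).2 ∧ (TopPt B).1 < s.1)

/-- `Right(B)`: among the points added by GREEDY while processing `Top(B)` with key greater
than `key (Top B)`, the one with the smallest key (junk if none exists). -/
noncomputable def rightPt (G B : Finset Pt) : Pt :=
  (((rightSet G B).filter (fun s => ∀ r ∈ rightSet G B, s.1 ≤ r.1)).toList).headI

/-!
Suppose `p` was added while processing `a`, because the rectangle spanned by `a` and some earlier
point `q` with the key of `p` contained no earlier point other than `q`, and let `b ∈ X` be the
point in the row of `q`. A point above `p` and below `q` would lie on the vertical side of this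
rectangle through `q`, so `q` is the first point above `p` and `CP(p) = (a, b)`. Likewise, `b` may
not lie on the horizontal side through `q`, except at `q` itself. Seen in the direction from `a` to
`p`, it is thus either strictly behind `a`, which is MMC, or level with or beyond `p`, which is MFC.
-/

/-- The pair `(a, q)` is unsatisfied in `S` when GREEDY comes to `a`: among the points of `S`
earlier than `a`, only `q` lies in the rectangle spanned by `a` and `q`. GREEDY adds a point below
such a `q` if its key also differs from that of `a`, which is kept out of this definition. -/
structure IsUnsatisfied (S : Finset Pt) (a q : Pt) : Prop where
  mem : q ∈ S
  time_lt : q.2 < a.2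
  eq_of_inRect : ∀ r ∈ S, r.2 < a.2 → inRect a q r → r = q

namespace IsUnsatisfied

variable {S T : Finset Pt} {a b q : Pt}

theorem congr (hST : ∀ r : Pt, r.2 < a.2 → (r ∈ S ↔ r ∈ T)) (h : IsUnsatisfied S a q) :
    IsUnsatisfied T a q where
  mem := (hST q h.time_lt).1 h.mem
  time_lt := h.time_lt
  eq_of_inRect r hr hra := h.eq_of_inRect r ((hST r hra).2 hr) hra

theorem time_le_of_key_eq (h : IsUnsatisfied S a q) (hb : b ∈ S) (hkey : b.1 = q.1)
    (htime : b.2 < a.2) : b.2 ≤ q.2 := by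
  by_contra! hlt
  have hbq : b = q := h.eq_of_inRect b hb htime (by unfold inRect; omega)
  exact hlt.ne' (congrArg Prod.snd hbq)

theorem key_lt_or_le (h : IsUnsatisfied S a q) (hb : b ∈ S) (htime : b.2 = q.2) (haq : a.1 < q.1) :
    b.1 < a.1 ∨ q.1 ≤ b.1 := by
  by_contra! hbetween
  have hbq : b = q := h.eq_of_inRect b hb (htime.trans_lt h.time_lt) (by unfold inRect; omega)
  exact hbetween.2.ne (congrArg Prod.fst hbq)

theorem lt_key_or_le (h : IsUnsatisfied S a q) (hb : b ∈ S) (htime : b.2 = q.2) (hqa : q.1 < a.1) :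
    a.1 < b.1 ∨ b.1 ≤ q.1 := by
  by_contra! hbetween
  have hbq : b = q := h.eq_of_inRect b hb (htime.trans_lt h.time_lt) (by unfold inRect; omega)
  exact hbetween.2.ne' (congrArg Prod.fst hbq)

end IsUnsatisfied

theorem firstAbove_eq_of_forall_time_le {S : Finset Pt} {p q : Pt} (hq : q ∈ S) (hkey : q.1 = p.1)
    (htime : q.2 < p.2) (hmax : ∀ r ∈ S, r.1 = p.1 → r.2 < p.2 → r.2 ≤ q.2) :
    firstAbove S p = q := by
  have hmax_eq :
      ((S.filter fun r => r.1 = p.1 ∧ r.2 < p.2).image Prod.snd).max = (q.2 : WithBot ℤ) := by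
    apply le_antisymm
    · refine Finset.max_le fun m hm => ?_
      obtain ⟨r, hr, rfl⟩ := Finset.mem_image.1 hm
      obtain ⟨hrS, hrkey, hrtime⟩ := Finset.mem_filter.1 hr
      exact WithBot.coe_le_coe.2 (hmax r hrS hrkey hrtime)
    · exact Finset.le_max (Finset.mem_image_of_mem _ (Finset.mem_filter.2 ⟨hq, hkey, htime⟩))
  rw [firstAbove, hmax_eq]
  exact Prod.ext hkey.symm rfl

theorem IsUnsatisfied.firstAbove_eq {S : Finset Pt} {a q : Pt} (h : IsUnsatisfied S a q) :
    firstAbove S (q.1, a.2) = q :=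
  firstAbove_eq_of_forall_time_le h.mem rfl h.time_lt fun _ hr hkey htime =>
    h.time_le_of_key_eq hr hkey htime

section Greedy

variable {X G : Finset Pt} {p r : Pt} {k n : ℕ}

theorem mem_greedyStep_iff {t : ℤ} :
    p ∈ greedyStep X G t ↔
      ∃ a ∈ X, ∃ q, IsUnsatisfied (X ∪ G) a q ∧ q.1 ≠ a.1 ∧ a.2 = t ∧ p = (q.1, t) := by
  simp only [greedyStep, Finset.mem_biUnion, Finset.mem_filter, Finset.mem_image]
  constructor
  · rintro ⟨a, ⟨ha, rfl⟩, q, ⟨⟨hq, hqa⟩, hkey, hempty⟩, rfl⟩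
    exact ⟨a, ha, q, ⟨hq, hqa, fun r hr hra => hempty r ⟨hr, hra⟩⟩, hkey, rfl, rfl⟩
  · rintro ⟨a, ha, q, hunsat, hkey, rfl, rfl⟩
    exact ⟨a, ⟨ha, rfl⟩, q,
      ⟨⟨hunsat.mem, hunsat.time_lt⟩, hkey, fun r hr => hunsat.eq_of_inRect r hr.1 hr.2⟩, rfl⟩

theorem mem_greedyUpTo_iff :
    p ∈ greedyUpTo X n ↔ ∃ k < n, p ∈ greedyStep X (greedyUpTo X k) ((k : ℤ) + 1) := by
  induction n with
  | zero => simp [greedyUpTo]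
  | succ n ih =>
    rw [greedyUpTo, Finset.mem_union, ih]
    simp only [Nat.lt_succ_iff_lt_or_eq, or_and_right, exists_or, exists_eq_left]

theorem greedyUpTo_mono (X : Finset Pt) : Monotone (greedyUpTo X) :=
  monotone_nat_of_le_succ fun _ => Finset.subset_union_left

theorem mem_greedyUpTo_iff_of_time_le (hkn : k ≤ n) (hr : r.2 ≤ k) :
    r ∈ greedyUpTo X k ↔ r ∈ greedyUpTo X n := by
  refine ⟨fun h => greedyUpTo_mono X hkn h, fun h => ?_⟩
  obtain ⟨j, -, hj⟩ := mem_greedyUpTo_iff.1 h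
  obtain ⟨_, _, _, _, _, _, rfl⟩ := mem_greedyStep_iff.1 hj
  exact mem_greedyUpTo_iff.2 ⟨j, Int.ofNat_le.1 hr, hj⟩

theorem exists_isUnsatisfied_of_mem_greedyG (hp : p ∈ greedyG n X) :
    ∃ a ∈ X, ∃ q, IsUnsatisfied (X ∪ greedyG n X) a q ∧ q.1 ≠ a.1 ∧ p = (q.1, a.2) := by
  obtain ⟨k, hk, hpk⟩ := mem_greedyUpTo_iff.1 hp
  obtain ⟨a, ha, q, hunsat, hkey, hat, rfl⟩ := mem_greedyStep_iff.1 hpk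
  refine ⟨a, ha, q, hunsat.congr fun r hra => ?_, hkey, by rw [hat]⟩
  rw [Finset.mem_union, Finset.mem_union, greedyG,
    mem_greedyUpTo_iff_of_time_le hk.le (by omega)]

theorem exists_mem_time_eq_of_mem_union_greedyG (hr : r ∈ X ∪ greedyG n X) :
    ∃ b ∈ X, b.2 = r.2 := by
  rcases Finset.mem_union.1 hr with hrX | hrG
  · exact ⟨r, hrX, rfl⟩
  · obtain ⟨a, ha, q, -, -, rfl⟩ := exists_isUnsatisfied_of_mem_greedyG hrG
    exact ⟨a, ha, rfl⟩

end Greedy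

theorem OP_eq_of_time_eq {X : Finset Pt} (hX : Set.InjOn Prod.snd (X : Set Pt)) {a r : Pt}
    (ha : a ∈ X) (htime : a.2 = r.2) : OP X r = a := by
  have hrow : X.filter (fun p => p.2 = r.2) = {a} := by
    refine Finset.eq_singleton_iff_unique_mem.2 ⟨Finset.mem_filter.2 ⟨ha, htime⟩, fun b hb => ?_⟩
    obtain ⟨hbX, hbr⟩ := Finset.mem_filter.1 hb
    exact hX hbX ha (hbr.trans htime.symm)
  rw [OP, hrow, Finset.toList_singleton, List.headI_cons]

theorem IsPermPointSet.injOn_time {n : ℕ} {X : Finset Pt} (hX : IsPermPointSet n X) :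
    Set.InjOn Prod.snd (X : Set Pt) := by
  obtain ⟨σ, rfl⟩ := hX
  rw [Finset.coe_image, Finset.coe_univ, Set.image_univ]
  rintro _ ⟨s, rfl⟩ _ ⟨t, rfl⟩ hst
  obtain rfl : s = t := Fin.ext (by simpa using hst)
  rfl

theorem cp_mmc_or_mfc_general (n : ℕ) (X : Finset Pt) (hX : Set.InjOn Prod.snd (X : Set Pt)) :
    ∀ p ∈ greedyG n X, inMMC X (greedyG n X) p ∨ inMFC X (greedyG n X) p := by
  intro p hp
  obtain ⟨a, ha, q, hunsat, hkey, rfl⟩ := exists_isUnsatisfied_of_mem_greedyG hp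
  obtain ⟨b, hb, hbq⟩ := exists_mem_time_eq_of_mem_union_greedyG hunsat.mem
  have hCP : CP X (greedyG n X) (q.1, a.2) = (a, b) := by
    rw [CP, hunsat.firstAbove_eq, OP_eq_of_time_eq hX (r := (q.1, a.2)) ha rfl,
      OP_eq_of_time_eq hX hb hbq]
  have hba : b.2 < a.2 := hbq.trans_lt hunsat.time_lt
  have hbS : b ∈ X ∪ greedyG n X := Finset.mem_union_left _ hb
  simp only [inMMC, inMFC, hCP]
  rcases hkey.lt_or_gt with hqa | haq
  · rcases hunsat.lt_key_or_le hbS hbq hqa with hab | hbq'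
    · exact Or.inl (Or.inr ⟨hqa, hab, hba⟩)
    · exact Or.inr (Or.inr ⟨hqa, hbq', hba⟩)
  · rcases hunsat.key_lt_or_le hbS hbq haq with hab | hqb
    · exact Or.inl (Or.inl ⟨haq, hab, hba⟩)
    · exact Or.inr (Or.inl ⟨haq, hqb, hba⟩)

/-- For every `p ∈ G`, either `CP(p) ∈ MMC` or `CP(p) ∈ MFC`. -/
theorem cp_mmc_or_mfc (n : ℕ) (X : Finset Pt) (hX : IsPermPointSet n X) :
    ∀ p ∈ greedyG n X, inMMC X (greedyG n X) p ∨ inMFC X (greedyG n X) p :=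
  cp_mmc_or_mfc_general n X hX.injOn_time
end

section
/- Let B be a block of X, let p₁ ∈ G, and let CP(p₁) = (p, q). If p ∈ B and p ≠ Top(B), then q ∈ B. -/
open Finset

attribute [local instance] Classical.propDecidable

/-!
Suppose GREEDY adds `p₁` while processing `p ∈ B`, because `p` sees `v` in the column of `p₁`, and
suppose `v` were older than `T = Top(B)`. GREEDY only touches columns that already contain a point
of `X`, so before `T` all columns from that of `T` to that of `p` are empty. Hence `v` lies outside
them and is just as visible from `T`, so that GREEDY adds a point to the column of `v` while
processing `T`. That point hides `v` from `p`, a contradiction. So the time of the first point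
above `p₁`, which is at least that of `v`, lies between those of `T` and `p`.
-/

/-- `p` sees `q` in `S`: among the points of `S` earlier than `p`, the point `q` lies in another
column than `p` and is the only one in the rectangle spanned by `p` and `q`. This is the condition
under which GREEDY, with `S` the current point set, adds `(key q, time p)` while processing `p`. -/
structure Sees (S : Finset Pt) (p q : Pt) : Prop where
  mem : q ∈ S
  time_lt : q.2 < p.2
  key_ne : q.1 ≠ p.1
  eq_of_inRect : ∀ s ∈ S, s.2 < p.2 → inRect p q s → s = q

/-- A block relative to `X`: `B` consists of the points of `X` in some time interval, and also of
those in some key interval. Unlike for `IsBlock`, the keys of `B` may have gaps at integers that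
are not keys of `X`. Both conditions are encoded as convexity, which does not mention the
endpoints. -/
structure IsConvexBlock (X B : Finset Pt) : Prop where
  subset : B ⊆ X
  mem_of_time_mem_Icc : ∀ x ∈ B, ∀ z ∈ B, ∀ y ∈ X, y.2 ∈ Set.Icc x.2 z.2 → y ∈ B
  mem_of_key_mem_Icc : ∀ x ∈ B, ∀ z ∈ B, ∀ y ∈ X, y.1 ∈ Set.Icc x.1 z.1 → y ∈ B

namespace IsPermPointSet

variable {n : ℕ} {X : Finset Pt}

theorem injOn_time_s13 (hX : IsPermPointSet n X) : Set.InjOn Prod.snd (X : Set Pt) := by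
  obtain ⟨σ, rfl⟩ := hX
  intro x hx y hy hxy
  obtain ⟨a, -, rfl⟩ := mem_image.1 (mem_coe.1 hx)
  obtain ⟨b, -, rfl⟩ := mem_image.1 (mem_coe.1 hy)
  have hab : a = b := Fin.ext (by simpa using hxy)
  rw [hab]

theorem injOn_key (hX : IsPermPointSet n X) : Set.InjOn Prod.fst (X : Set Pt) := by
  obtain ⟨σ, rfl⟩ := hX
  intro x hx y hy hxy
  obtain ⟨a, -, rfl⟩ := mem_image.1 (mem_coe.1 hx)
  obtain ⟨b, -, rfl⟩ := mem_image.1 (mem_coe.1 hy)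
  have hab : σ a = σ b := Fin.ext (by simpa using hxy)
  rw [σ.injective hab]

theorem time_pos (hX : IsPermPointSet n X) : ∀ x ∈ X, 0 < x.2 := by
  obtain ⟨σ, rfl⟩ := hX
  intro x hx
  obtain ⟨a, -, rfl⟩ := mem_image.1 hx
  exact Int.natCast_succ_pos a

end IsPermPointSet

theorem IsBlock.isConvexBlock {X B : Finset Pt} (hB : IsBlock X B)
    (hkey : Set.InjOn Prod.fst (X : Set Pt)) : IsConvexBlock X B := by
  obtain ⟨-, ⟨i, j, htimes⟩, c, d, hkeys⟩ := hB
  have hsub : B ⊆ X := htimes ▸ filter_subset _ _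
  refine ⟨hsub, fun x hx z hz y hy hyxz => ?_, fun x hx z hz y hy hyxz => ?_⟩
  · rw [htimes, mem_filter] at hx hz ⊢
    exact ⟨hy, hx.2.1.trans hyxz.1, hyxz.2.trans hz.2.2⟩
  · have hxc := mem_Icc.1 (hkeys ▸ mem_image_of_mem Prod.fst hx)
    have hzd := mem_Icc.1 (hkeys ▸ mem_image_of_mem Prod.fst hz)
    have hyB : y.1 ∈ B.image Prod.fst :=
      hkeys ▸ mem_Icc.2 ⟨hxc.1.trans hyxz.1, hyxz.2.trans hzd.2⟩
    obtain ⟨b, hb, hby⟩ := mem_image.1 hyB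
    exact hkey (hsub hb) hy hby ▸ hb

theorem IsConvexBlock.mem_of_key_mem_uIcc {X B : Finset Pt} {x y z : Pt} (hB : IsConvexBlock X B)
    (hx : x ∈ B) (hz : z ∈ B) (hy : y ∈ X) (hyxz : y.1 ∈ Set.uIcc x.1 z.1) : y ∈ B := by
  rcases Set.mem_uIcc.1 hyxz with h | h
  · exact hB.mem_of_key_mem_Icc x hx z hz y hy h
  · exact hB.mem_of_key_mem_Icc z hz x hx y hy h

theorem headI_toList_mem {α : Type*} [Inhabited α] {s : Finset α} (hs : s.Nonempty) :
    s.toList.headI ∈ s := by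
  obtain ⟨a, l, hal⟩ := List.exists_cons_of_ne_nil hs.toList_ne_nil
  rw [← mem_toList, hal]
  exact List.mem_cons_self

section TopPt

variable {B : Finset Pt} {p : Pt}

theorem TopPt_mem_filter (hB : B.Nonempty) : TopPt B ∈ B.filter fun p => ∀ q ∈ B, p.2 ≤ q.2 := by
  obtain ⟨x, hx, hmin⟩ := exists_min_image B Prod.snd hB
  exact headI_toList_mem ⟨x, mem_filter.2 ⟨hx, hmin⟩⟩

theorem TopPt_mem (hB : B.Nonempty) : TopPt B ∈ B :=
  (mem_filter.1 (TopPt_mem_filter hB)).1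

theorem time_TopPt_le (hp : p ∈ B) : (TopPt B).2 ≤ p.2 :=
  (mem_filter.1 (TopPt_mem_filter ⟨p, hp⟩)).2 p hp

theorem time_TopPt_lt (htime : Set.InjOn Prod.snd (B : Set Pt)) (hp : p ∈ B)
    (hne : p ≠ TopPt B) : (TopPt B).2 < p.2 :=
  (time_TopPt_le hp).lt_of_ne fun h => hne (htime hp (TopPt_mem ⟨p, hp⟩) h.symm)

end TopPt

theorem firstAbove_mem_filter_and_le_time {S : Finset Pt} {p q : Pt} (hq : q ∈ S)
    (hkey : q.1 = p.1) (hlt : q.2 < p.2) :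
    (firstAbove S p ∈ S.filter fun s => s.1 = p.1 ∧ s.2 < p.2) ∧ q.2 ≤ (firstAbove S p).2 := by
  have hmem : q.2 ∈ (S.filter fun s => s.1 = p.1 ∧ s.2 < p.2).image Prod.snd :=
    mem_image_of_mem _ (mem_filter.2 ⟨hq, hkey, hlt⟩)
  obtain ⟨t, ht⟩ := max_of_mem hmem
  have heq : firstAbove S p = (p.1, t) := by rw [firstAbove, ht, WithBot.unbotD_coe]
  obtain ⟨x, hx, hxt⟩ := mem_image.1 (mem_of_max ht)
  have hxeq : x = (p.1, t) := Prod.ext (mem_filter.1 hx).2.1 hxt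
  rw [heq]
  exact ⟨hxeq ▸ hx, le_max_of_eq hmem ht⟩

namespace Sees

variable {S : Finset Pt} {p q T : Pt}

theorem notMem_of_time_lt (h : Sees S p q) {t : ℤ} (hqt : q.2 < t)
    (htp : t < p.2) : (q.1, t) ∉ S := fun hmem => by
  have hrect : inRect p q (q.1, t) := by
    simp only [inRect]
    omega
  have heq : (q.1, t) = q := h.eq_of_inRect _ hmem htp hrect
  exact hqt.ne' (congrArg Prod.snd heq)

theorem of_empty_columns (h : Sees S p q) (hqT : q.2 < T.2) (hTp : T.2 < p.2)
    (hempty : ∀ s ∈ S, s.2 < T.2 → s.1 ∉ Set.uIcc T.1 p.1) : Sees S T q := by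
  have hq := hempty q h.mem hqT
  simp only [Set.mem_uIcc] at hempty hq
  refine ⟨h.mem, hqT, by omega, fun s hs hsT hrect => ?_⟩
  have hs' := hempty s hs hsT
  -- `T` and `p` lie on the same side of both `s` and `q`.
  have hprect : inRect p q s := by
    simp only [inRect] at hrect ⊢
    omega
  exact h.eq_of_inRect s hs (hsT.trans hTp) hprect

end Sees

section greedy

variable {X G H B : Finset Pt} {n : ℕ} {t : ℤ} {p q r T : Pt}

theorem mem_greedyStep :
    r ∈ greedyStep X G t ↔
      r.2 = t ∧ ∃ p ∈ X, p.2 = t ∧ ∃ q, Sees (X ∪ G) p q ∧ q.1 = r.1 := by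
  simp only [greedyStep, mem_biUnion, mem_image, mem_filter]
  constructor
  · rintro ⟨p, ⟨hp, rfl⟩, q, ⟨⟨hq, hlt⟩, hne, hvis⟩, rfl⟩
    exact ⟨rfl, p, hp, rfl, q, ⟨hq, hlt, hne, fun s hs hsp => hvis s ⟨hs, hsp⟩⟩, rfl⟩
  · rintro ⟨hr, p, hp, rfl, q, hq, hqr⟩
    exact ⟨p, ⟨hp, rfl⟩, q, ⟨⟨hq.mem, hq.time_lt⟩, hq.key_ne,
      fun s hs => hq.eq_of_inRect s hs.1 hs.2⟩, Prod.ext hqr hr.symm⟩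

theorem greedyStep_union_of_le_time (hH : ∀ r ∈ H, t ≤ r.2) :
    greedyStep X (G ∪ H) t = greedyStep X G t := by
  have hlate : H.filter (fun s => s.2 < t) = ∅ :=
    filter_eq_empty_iff.2 fun r hr => (hH r hr).not_gt
  have hearly : (X ∪ (G ∪ H)).filter (fun s => s.2 < t) = (X ∪ G).filter (fun s => s.2 < t) := by
    rw [← union_assoc, filter_union _ (X ∪ G), hlate, union_empty]
  rw [greedyStep, greedyStep, hearly]

theorem greedyStep_greedyUpTo_succ (ht : t ≤ n + 1) :
    greedyStep X (greedyUpTo X (n + 1)) t = greedyStep X (greedyUpTo X n) t :=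
  greedyStep_union_of_le_time fun _ hr => ht.trans_eq (mem_greedyStep.1 hr).1.symm

/-- The step may be taken against the whole output because points added later do not affect what
is visible at an earlier time. -/
theorem mem_greedyUpTo_iff_mem_greedyStep :
    r ∈ greedyUpTo X n ↔ r.2 ∈ Set.Ioc 0 (n : ℤ) ∧ r ∈ greedyStep X (greedyUpTo X n) r.2 := by
  induction n with
  | zero => simp [greedyUpTo]
  | succ n ih =>
    rw [greedyUpTo, mem_union, ih, ← greedyUpTo, Nat.cast_succ]
    constructor
    · rintro (⟨⟨hpos, hle⟩, hr⟩ | hr)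
      · exact ⟨⟨hpos, by omega⟩, by rwa [greedyStep_greedyUpTo_succ (by omega)]⟩
      · have hrt : r.2 = n + 1 := (mem_greedyStep.1 hr).1
        exact ⟨⟨by omega, hrt.le⟩, by rwa [hrt, greedyStep_greedyUpTo_succ le_rfl]⟩
    · rintro ⟨⟨hpos, hle⟩, hr⟩
      rw [greedyStep_greedyUpTo_succ hle] at hr
      rcases hle.lt_or_eq with hlt | heq
      · exact Or.inl ⟨⟨hpos, by omega⟩, hr⟩
      · exact Or.inr (heq ▸ hr)

theorem mem_greedyG :
    r ∈ greedyG n X ↔ r.2 ∈ Set.Ioc 0 (n : ℤ) ∧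
      ∃ p ∈ X, p.2 = r.2 ∧ ∃ q, Sees (X ∪ greedyG n X) p q ∧ q.1 = r.1 := by
  rw [greedyG, mem_greedyUpTo_iff_mem_greedyStep, mem_greedyStep, eq_self, true_and]

theorem exists_mem_key_eq_time_le (hr : r ∈ X ∪ greedyUpTo X n) :
    ∃ x ∈ X, x.1 = r.1 ∧ x.2 ≤ r.2 := by
  induction n generalizing r with
  | zero => exact ⟨r, by simpa [greedyUpTo] using hr, rfl, le_rfl⟩
  | succ n ih =>
    rw [greedyUpTo, ← union_assoc, mem_union] at hr
    rcases hr with hr | hr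
    · exact ih hr
    · obtain ⟨hrt, p, -, hpt, q, hq, hqr⟩ := mem_greedyStep.1 hr
      obtain ⟨x, hx, hxq, hle⟩ := ih hq.mem
      exact ⟨x, hx, hxq.trans hqr, hle.trans (hq.time_lt.le.trans_eq (hpt.trans hrt.symm))⟩

theorem OP_mem_filter (hr : r ∈ X ∪ greedyG n X) : OP X r ∈ X.filter fun p => p.2 = r.2 := by
  apply headI_toList_mem
  rcases mem_union.1 hr with hr | hr
  · exact ⟨r, mem_filter.2 ⟨hr, rfl⟩⟩
  · obtain ⟨-, p, hp, hpr, -⟩ := mem_greedyG.1 hr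
    exact ⟨p, mem_filter.2 ⟨hp, hpr⟩⟩

theorem OP_mem (hr : r ∈ X ∪ greedyG n X) : OP X r ∈ X :=
  (mem_filter.1 (OP_mem_filter hr)).1

theorem time_OP (hr : r ∈ X ∪ greedyG n X) : (OP X r).2 = r.2 :=
  (mem_filter.1 (OP_mem_filter hr)).2

theorem exists_sees_OP (htime : Set.InjOn Prod.snd (X : Set Pt)) (hr : r ∈ greedyG n X) :
    ∃ q, Sees (X ∪ greedyG n X) (OP X r) q ∧ q.1 = r.1 := by
  obtain ⟨-, p, hp, hpr, hvis⟩ := mem_greedyG.1 hr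
  have hr' : r ∈ X ∪ greedyG n X := mem_union_right X hr
  rwa [htime (OP_mem hr') hp ((time_OP hr').trans hpr.symm)]

theorem mem_greedyG_of_sees (hp : p ∈ X) (ht : p.2 ∈ Set.Ioc 0 (n : ℤ))
    (h : Sees (X ∪ greedyG n X) p q) : (q.1, p.2) ∈ greedyG n X :=
  mem_greedyG.2 ⟨ht, p, hp, rfl, q, h, rfl⟩

theorem time_le_of_sees (hT : T ∈ X) (hTt : T.2 ∈ Set.Ioc 0 (n : ℤ)) (hTp : T.2 < p.2)
    (hcolumns : ∀ x ∈ X, x.1 ∈ Set.uIcc T.1 p.1 → T.2 ≤ x.2)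
    (h : Sees (X ∪ greedyG n X) p q) : T.2 ≤ q.2 := by
  by_contra! hqT
  have hempty : ∀ s ∈ X ∪ greedyG n X, s.2 < T.2 → s.1 ∉ Set.uIcc T.1 p.1 := by
    intro s hs hsT hsmem
    obtain ⟨x, hx, hxs, hle⟩ := exists_mem_key_eq_time_le hs
    exact (hcolumns x hx (hxs ▸ hsmem)).not_gt (hle.trans_lt hsT)
  have hTq : Sees (X ∪ greedyG n X) T q := h.of_empty_columns hqT hTp hempty
  exact h.notMem_of_time_lt hqT hTp (mem_union_right X (mem_greedyG_of_sees hT hTt hTq))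

theorem IsConvexBlock.time_TopPt_le_of_sees (hB : IsConvexBlock X B)
    (htime : Set.InjOn Prod.snd (X : Set Pt)) (hpos : ∀ x ∈ X, 0 < x.2) (hp : p ∈ B)
    (hpn : p.2 ≤ n) (hne : p ≠ TopPt B) (h : Sees (X ∪ greedyG n X) p q) :
    (TopPt B).2 ≤ q.2 := by
  have hT : TopPt B ∈ B := TopPt_mem ⟨p, hp⟩
  have hTp : (TopPt B).2 < p.2 := time_TopPt_lt (htime.mono (coe_subset.2 hB.subset)) hp hne
  exact time_le_of_sees (hB.subset hT) ⟨hpos _ (hB.subset hT), hTp.le.trans hpn⟩ hTp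
    (fun x hx hxkey => time_TopPt_le (hB.mem_of_key_mem_uIcc hT hp hx hxkey)) h

theorem pair_local_to_block_general {p₁ : Pt} (htime : Set.InjOn Prod.snd (X : Set Pt))
    (hpos : ∀ x ∈ X, 0 < x.2) (hB : IsConvexBlock X B) (hp₁ : p₁ ∈ greedyG n X)
    (hCP : CP X (greedyG n X) p₁ = (p, q)) (hpB : p ∈ B) (hptop : p ≠ TopPt B) : q ∈ B := by
  obtain ⟨rfl, rfl⟩ := Prod.mk.inj hCP
  have hp₁time : (OP X p₁).2 = p₁.2 := time_OP (mem_union_right X hp₁)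
  obtain ⟨v, hv, hvkey⟩ := exists_sees_OP htime hp₁
  have htop : (TopPt B).2 ≤ v.2 := hB.time_TopPt_le_of_sees htime hpos hpB
    (hp₁time.trans_le (mem_greedyG.1 hp₁).1.2) hptop hv
  obtain ⟨habove, hvabove⟩ :=
    firstAbove_mem_filter_and_le_time hv.mem hvkey (hv.time_lt.trans_eq hp₁time)
  obtain ⟨hmem, -, hlt⟩ := mem_filter.1 habove
  refine hB.mem_of_time_mem_Icc _ (TopPt_mem ⟨_, hpB⟩) _ hpB _ (OP_mem hmem) ?_
  rw [time_OP hmem, hp₁time]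
  exact ⟨htop.trans hvabove, hlt.le⟩

end greedy

/-- Let `B` be a block of `X`, `p₁ ∈ G` and `CP(p₁) = (p, q)`. If `p ∈ B`
and `p ≠ Top(B)`, then `q ∈ B`. -/
theorem pair_local_to_block (n : ℕ) (X : Finset Pt) (hX : IsPermPointSet n X)
    (B : Finset Pt) (hB : IsBlock X B) (p₁ p q : Pt) (hp₁ : p₁ ∈ greedyG n X)
    (hCP : CP X (greedyG n X) p₁ = (p, q)) (hpB : p ∈ B) (hptop : p ≠ TopPt B) :
    q ∈ B :=
  pair_local_to_block_general hX.injOn_time_s13 hX.time_pos (hB.isConvexBlock hX.injOn_key)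
    hp₁ hCP hpB hptop
end
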